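/- If the tit-for-tat strategy is suggested to both agents of the peer-to-peer setting, then the resulting pair of strategies is a Nash equilibrium: for each i ∈ {0,1} and every alternative strategy σ'ᵢ of Agent i, if the play determined by σ'ᵢ together with the tit-for-tat strategy of Agent 1−i satisfies Agent i's objective □◇(dᵢ ∧ u_{1−i}), then the play determined by both agents playing tit-for-tat also satisfies Agent i's objective. -/

import Mathlib

/-- `(hists σ₀ σ₁ k).1` (resp. `.2`) is the list of Agent 0's (resp. Agent 1's)
actions `(u, d)` at times `0, …, k-1` when Agent 0 plays strategy `σ₀` and
Agent 1 plays strategy `σ₁` (each strategy maps the other agent's past actions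
to the agent's current action). -/
def hists (σ₀ σ₁ : List (Bool × Bool) → Bool × Bool) :
    ℕ → List (Bool × Bool) × List (Bool × Bool)
  | 0 => ([], [])
  | k + 1 =>
    ((hists σ₀ σ₁ k).1 ++ [σ₀ (hists σ₀ σ₁ k).2],
     (hists σ₀ σ₁ k).2 ++ [σ₁ (hists σ₀ σ₁ k).1])

/-- Agent 0's action `(u₀(k), d₀(k))` in the play determined by `(σ₀, σ₁)`. -/
def act₀ (σ₀ σ₁ : List (Bool × Bool) → Bool × Bool) (k : ℕ) : Bool × Bool :=
  σ₀ (hists σ₀ σ₁ k).2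

/-- Agent 1's action `(u₁(k), d₁(k))` in the play determined by `(σ₀, σ₁)`. -/
def act₁ (σ₀ σ₁ : List (Bool × Bool) → Bool × Bool) (k : ℕ) : Bool × Bool :=
  σ₁ (hists σ₀ σ₁ k).1

/-- Agent 0's objective `□◇(d₀ ∧ u₁)` holds in the play determined by `(σ₀, σ₁)`. -/
def obj₀ (σ₀ σ₁ : List (Bool × Bool) → Bool × Bool) : Prop :=
  ∀ N : ℕ, ∃ k, N ≤ k ∧ (act₀ σ₀ σ₁ k).2 = true ∧ (act₁ σ₀ σ₁ k).1 = true

/-- Agent 1's objective `□◇(d₁ ∧ u₀)` holds in the play determined by `(σ₀, σ₁)`. -/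
def obj₁ (σ₀ σ₁ : List (Bool × Bool) → Bool × Bool) : Prop :=
  ∀ N : ℕ, ∃ k, N ≤ k ∧ (act₁ σ₀ σ₁ k).2 = true ∧ (act₀ σ₀ σ₁ k).1 = true

/-- The tit-for-tat strategy: always download (`d = true`); upload at time `0`,
and afterwards reciprocate the upload bit of the other agent's last action. -/
def tft : List (Bool × Bool) → Bool × Bool :=
  fun hist => ((hist.getLast?.map Prod.fst).getD true, true)

/-- When both agents play tit-for-tat, both always upload and download. -/
theorem tft_play (k : ℕ) :
    tft (hists tft tft k).1 = (true, true) ∧ tft (hists tft tft k).2 = (true, true) := by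
  induction k with
  | zero => simp [hists, tft]
  | succ k ih =>
    obtain ⟨h1, h2⟩ := ih
    simp only [hists, h1, h2]
    simp [tft]

/-- If the tit-for-tat strategy is suggested to both agents, the resulting pair
of strategies is a Nash equilibrium: no agent can gain by unilaterally
deviating. -/
theorem titForTat_nash_equilibrium :
    (∀ σ'₀ : List (Bool × Bool) → Bool × Bool,
        obj₀ σ'₀ tft → obj₀ tft tft) ∧
    (∀ σ'₁ : List (Bool × Bool) → Bool × Bool,
        obj₁ tft σ'₁ → obj₁ tft tft) := by
  refine ⟨fun _ _ N => ⟨N, le_rfl, ?_, ?_⟩, fun _ _ N => ⟨N, le_rfl, ?_, ?_⟩⟩ <;>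
    simp [act₀, act₁, tft_play N]
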